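/- Let 𝒮₀ be a nonempty decreasing subset of 𝒮 with 𝒮₀≠𝒮, and write a(δ') := inf_{μ∈𝒞(𝒮₀)} Λ_{δ',𝒮₀}(μ) for δ'>0. Then a is strictly decreasing on (0,∞). Moreover: if there exist E₀∈𝒮₀ and a nonempty set E'⊆E₀ with E'∩∂E₀=∅ such that E' = supp(μ|₁) for some μ∈𝒫(V_S) satisfying μq=μ for some q∈𝒯_S, then lim_{δ'→0+} a(δ') = inf{ Λ₁(μ) : μ∈𝒫(V_S) and supp(μ|₁)⊆E₀∖∂E₀ for some E₀∈𝒮₀ } < ∞; otherwise lim_{δ'→0+} a(δ') = ∞. -/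

import Mathlib

open scoped BigOperators Classical ENNReal
open Filter Topology

noncomputable section
namespace ORRW

/-- Probability measures on a finite type `A`, topologized as a subset of `ℝ^A`. -/
abbrev ProbMeas (A : Type) [Fintype A] : Type :=
  {p : A → ℝ // (∀ a, 0 ≤ p a) ∧ ∑ a, p a = 1}

/-- Relative entropy `R(γ‖ρ)` between two finitely supported "rows", valued in `EReal`,
with `+∞` when absolute continuity fails. -/
def relEnt {A : Type} [Fintype A] (γ ρ : A → ℝ) : EReal :=
  if ∀ a, ρ a = 0 → γ a = 0 then ((∑ a, γ a * Real.log (γ a / ρ a) : ℝ) : EReal)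
  else (⊤ : EReal)

/-- `∫ R(q‖p) dν = Σ_a ν(a) · R(q(a,·)‖p(a,·))`. -/
def relEntInt {A : Type} [Fintype A] (ν : A → ℝ) (q p : A → A → ℝ) : EReal :=
  ∑ a, (ν a : EReal) * relEnt (q a) (p a)

/-- `ν` is an invariant measure of the kernel `q`. -/
def Invariant {A : Type} [Fintype A] (ν : A → ℝ) (q : A → A → ℝ) : Prop :=
  ∀ y, ∑ x, ν x * q x y = ν y

/-- Extended-real logarithm: `⊥` at nonpositive arguments. -/
def elog (x : ℝ) : EReal := if x ≤ 0 then (⊥ : EReal) else ((Real.log x : ℝ) : EReal)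

/-- Empirical measure of a finite trajectory `f : Fin (n+1) → A`. -/
def empMeas {A : Type} [Fintype A] [DecidableEq A] (n : ℕ) (f : Fin (n + 1) → A) :
    ProbMeas A :=
  ⟨fun a => ((Finset.univ.filter (fun i => f i = a)).card : ℝ) / (n + 1),
    fun a => by positivity, by
      have key : ∑ a : A, ((Finset.univ.filter (fun i => f i = a)).card) = n + 1 := by
        have h := Finset.card_eq_sum_card_fiberwise
          (s := (Finset.univ : Finset (Fin (n + 1)))) (t := (Finset.univ : Finset A))
          (f := f) (fun i _ => Finset.mem_univ (f i))
        simpa using h.symm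
      have key' : ∑ a : A, (((Finset.univ.filter (fun i => f i = a)).card : ℝ)) = (n : ℝ) + 1 := by
        have h2 := congrArg (fun m : ℕ => (m : ℝ)) key
        push_cast at h2
        simpa using h2
      rw [← Finset.sum_div, key', div_self (by positivity)]⟩

section Graph

variable {V : Type} [Fintype V] [DecidableEq V]

/-- Weight of an edge given the set `F` of already traversed edges. -/
def gw (δ : ℝ) (F : Finset (Sym2 V)) (e : Sym2 V) : ℝ := if e ∈ F then δ else 1

/-- The transition kernel `p̂_F` on `V`. -/
def phat (G : SimpleGraph V) [DecidableRel G.Adj] (δ : ℝ) (F : Finset (Sym2 V))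
    (x y : V) : ℝ :=
  if G.Adj x y then gw δ F s(x, y) / ∑ z ∈ G.neighborFinset x, gw δ F s(x, z) else 0

/-- Two edges are adjacent iff they share a vertex. -/
def edgeAdj (e e' : Sym2 V) : Prop := ∃ v, v ∈ e ∧ v ∈ e'

/-- `x` is a vertex of the edge set `F`. -/
def memVerts (F : Finset (Sym2 V)) (x : V) : Prop := ∃ e ∈ F, x ∈ e

/-- `𝒯_G`: stochastic matrices on `V` adapted to `G`. -/
def TG (G : SimpleGraph V) : Set (V → V → ℝ) :=
  {q | (∀ x y, 0 ≤ q x y) ∧ (∀ x, ∑ y, q x y = 1) ∧ ∀ x y, q x y ≠ 0 → G.Adj x y}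

/-- `𝒯(F)`: stochastic kernels from the vertex set of `F` to `V`, supported on `F`. -/
def TE (F : Finset (Sym2 V)) : Set (V → V → ℝ) :=
  {q | (∀ x y, 0 ≤ q x y) ∧ (∀ x, memVerts F x → ∑ y, q x y = 1) ∧
    ∀ x y, q x y ≠ 0 → s(x, y) ∈ F}

/-- `ℰ`: admissible increasing sequences of traversed edge sets. -/
def seqE (G : SimpleGraph V) [DecidableRel G.Adj] (v₁ : V) :
    Set (Fin G.edgeFinset.card → Finset (Sym2 V)) :=
  {Es | (∀ k, Es k ⊆ G.edgeFinset) ∧ (∀ k, (Es k).card = (k : ℕ) + 1) ∧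
    (∀ k l : Fin G.edgeFinset.card, (k : ℕ) + 1 = (l : ℕ) → Es k ⊂ Es l) ∧
    (∀ k : Fin G.edgeFinset.card, (k : ℕ) = 0 → ∃ e ∈ Es k, v₁ ∈ e) ∧
    (∀ k l : Fin G.edgeFinset.card, (k : ℕ) + 1 = (l : ℕ) →
      ∀ e ∈ Es l \ Es k, ∃ e' ∈ Es k, edgeAdj e e')}

/-- The rate function `I_δ`. -/
def Ifun (G : SimpleGraph V) [DecidableRel G.Adj] (v₁ : V) (δ : ℝ) (ν : ProbMeas V) : EReal :=
  sInf { c : EReal |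
    ∃ (νs : Fin G.edgeFinset.card → ProbMeas V) (r : Fin G.edgeFinset.card → ℝ)
      (Es : Fin G.edgeFinset.card → Finset (Sym2 V))
      (qs : Fin G.edgeFinset.card → V → V → ℝ),
      Es ∈ seqE G v₁ ∧ (∀ k, 0 ≤ r k) ∧ (∑ k, r k = 1) ∧
      (∀ k x, (νs k).1 x ≠ 0 → memVerts (Es k) x) ∧
      (∀ x, ∑ k, r k * (νs k).1 x = ν.1 x) ∧
      (∀ k, qs k ∈ TE (Es k)) ∧ (∀ k, Invariant (νs k).1 (qs k)) ∧
      c = ∑ k, ((r k : ℝ) : EReal) * relEntInt (νs k).1 (qs k) (phat G δ (Es k)) }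

/-- Edges traversed along a path, given as a list of consecutively visited vertices. -/
def pathEdges : List V → Finset (Sym2 V)
  | [] => ∅
  | [_] => ∅
  | x :: y :: t => insert s(x, y) (pathEdges (y :: t))

/-- Product of one-step ORRW transition probabilities along a trajectory,
the trajectory being listed in reverse chronological order. -/
def stepsProb (G : SimpleGraph V) [DecidableRel G.Adj] (δ : ℝ) : List V → ℝ
  | [] => 1
  | [_] => 1
  | y :: x :: t => phat G δ (pathEdges (x :: t).reverse) x y * stepsProb G δ (x :: t)

/-- The law of `(X_0, …, X_n)` for the `δ`-ORRW started at `v₁`. -/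
def trajProb (G : SimpleGraph V) [DecidableRel G.Adj] (δ : ℝ) (v₁ : V) (n : ℕ)
    (f : Fin (n + 1) → V) : ℝ :=
  if f 0 = v₁ then stepsProb G δ (List.ofFn f).reverse else 0

/-- `P_{v₁}(L_{n+1} ∈ C)`: the probability that the empirical measure of the first
`n+1` positions of the `δ`-ORRW lies in `C`. -/
def probEmp (G : SimpleGraph V) [DecidableRel G.Adj] (δ : ℝ) (v₁ : V) (n : ℕ)
    (C : Set (ProbMeas V)) : ℝ :=
  ∑ f : Fin (n + 1) → V, if empMeas n f ∈ C then trajProb G δ v₁ n f else 0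

/-- The family `𝒮` of edge sets of connected subgraphs having an edge at `v₁`. -/
def scrS (G : SimpleGraph V) [DecidableRel G.Adj] (v₁ : V) : Set (Finset (Sym2 V)) :=
  {F | F ⊆ G.edgeFinset ∧ (∃ e ∈ F, v₁ ∈ e) ∧
    ∀ x y : V, memVerts F x → memVerts F y →
      (SimpleGraph.fromEdgeSet (↑F : Set (Sym2 V))).Reachable x y}

/-- `𝒮₀` is a decreasing subset of `𝒮`. -/
def DecreasingIn (G : SimpleGraph V) [DecidableRel G.Adj] (v₁ : V)
    (S0 : Set (Finset (Sym2 V))) : Prop :=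
  ∀ F₁ F₂, F₁ ∈ scrS G v₁ → F₂ ∈ scrS G v₁ → F₁ ⊆ F₂ → F₂ ∈ S0 → F₁ ∈ S0

/-- `P_{v₁}(T_{𝒮₀} > n)`. -/
def probTgt (G : SimpleGraph V) [DecidableRel G.Adj] (δ : ℝ) (v₁ : V)
    (S0 : Set (Finset (Sym2 V))) (n : ℕ) : ℝ :=
  ∑ f : Fin (n + 1) → V,
    if ∀ k, 1 ≤ k → k ≤ n → pathEdges ((List.ofFn f).take (k + 1)) ∈ S0 then
      trajProb G δ v₁ n f
    else 0

/-- `P_{v₁}(C_E > n)` for the edge cover time `C_E`. -/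
def probCgt (G : SimpleGraph V) [DecidableRel G.Adj] (δ : ℝ) (v₁ : V) (n : ℕ) : ℝ :=
  ∑ f : Fin (n + 1) → V,
    if ¬ G.edgeFinset ⊆ pathEdges (List.ofFn f) then trajProb G δ v₁ n f else 0

/-- `E_{v₁}[exp (α T_{𝒮₀})]`, valued in `ℝ≥0∞`; the stopping time takes values in
`{1, 2, …} ∪ {∞}`. -/
def expT (G : SimpleGraph V) [DecidableRel G.Adj] (δ : ℝ) (v₁ : V)
    (S0 : Set (Finset (Sym2 V))) (α : ℝ) : ℝ≥0∞ :=
  (∑' n : ℕ, ENNReal.ofReal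
      (Real.exp (α * (n + 1)) * (probTgt G δ v₁ S0 n - probTgt G δ v₁ S0 (n + 1)))) +
    (if 0 < α then (⊤ : ℝ≥0∞) else if α = 0 then 1 else 0) *
      ENNReal.ofReal (⨅ n : ℕ, probTgt G δ v₁ S0 n)

/-- `E_{v₁}[exp (α C_E)]`, valued in `ℝ≥0∞`. -/
def expC (G : SimpleGraph V) [DecidableRel G.Adj] (δ : ℝ) (v₁ : V) (α : ℝ) : ℝ≥0∞ :=
  (∑' n : ℕ, ENNReal.ofReal
      (Real.exp (α * (n + 1)) * (probCgt G δ v₁ n - probCgt G δ v₁ (n + 1)))) +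
    (if 0 < α then (⊤ : ℝ≥0∞) else if α = 0 then 1 else 0) *
      ENNReal.ofReal (⨅ n : ℕ, probCgt G δ v₁ n)

/-- The critical exponent `α_c(δ)` attached to a family `𝒮₀` of edge sets. -/
def alphaC (G : SimpleGraph V) [DecidableRel G.Adj] (δ : ℝ)
    (S0 : Set (Finset (Sym2 V))) : EReal :=
  sInf { c : EReal | ∃ (ν : ProbMeas V) (F : Finset (Sym2 V)) (q : V → V → ℝ),
    F ∈ S0 ∧ q ∈ TE F ∧ (∀ x, ν.1 x ≠ 0 → memVerts F x) ∧ Invariant ν.1 q ∧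
    c = relEntInt ν.1 q (phat G δ F) }

/-- `α_c^1(δ)`: the critical exponent for the cover time. -/
def alphaC1 (G : SimpleGraph V) [DecidableRel G.Adj] (v₁ : V) (δ : ℝ) : EReal :=
  alphaC G δ (scrS G v₁ \ {G.edgeFinset})

end Graph

section Lifted

variable {V : Type} [Fintype V] [LinearOrder V]

/-- Smaller endpoint of an unordered pair. -/
def sym2lo (e : Sym2 V) : V := Sym2.lift ⟨fun a b => min a b, fun a b => min_comm a b⟩ e

/-- Larger endpoint of an unordered pair. -/
def sym2hi (e : Sym2 V) : V := Sym2.lift ⟨fun a b => max a b, fun a b => max_comm a b⟩ e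

/-- `V_S = E × {-1, 1}`: vertex set of the lifted directed graph `S`
(`true` plays the role of `+1`). -/
abbrev VSet (G : SimpleGraph V) [DecidableRel G.Adj] : Type :=
  {e : Sym2 V // e ∈ G.edgeFinset} × Bool

/-- Tail `z⁻` of an oriented edge. -/
def zm (G : SimpleGraph V) [DecidableRel G.Adj] (z : VSet G) : V :=
  if z.2 then sym2lo z.1.1 else sym2hi z.1.1

/-- Head `z⁺` of an oriented edge. -/
def zp (G : SimpleGraph V) [DecidableRel G.Adj] (z : VSet G) : V :=
  if z.2 then sym2hi z.1.1 else sym2lo z.1.1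

/-- The kernel `p_F` on the lifted directed graph `S`. -/
def pS (G : SimpleGraph V) [DecidableRel G.Adj] (δ : ℝ) (F : Finset (Sym2 V))
    (z₁ z₂ : VSet G) : ℝ :=
  if zp G z₁ = zm G z₂ then
    gw δ F z₂.1.1 / ∑ w : VSet G, (if zp G z₁ = zm G w then gw δ F w.1.1 else 0)
  else 0

/-- `𝒯_S`: stochastic matrices on `V_S` moving along orientations. -/
def TS (G : SimpleGraph V) [DecidableRel G.Adj] : Set (VSet G → VSet G → ℝ) :=
  {q | (∀ z w, 0 ≤ q z w) ∧ (∀ z, ∑ w, q z w = 1) ∧ ∀ z w, q z w ≠ 0 → zp G z = zm G w}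

/-- `𝒞(𝒮₀)`: probability measures on `V_S` whose first marginal is supported in
some member of `𝒮₀`. -/
def CC (G : SimpleGraph V) [DecidableRel G.Adj] (S0 : Set (Finset (Sym2 V))) :
    Set (ProbMeas (VSet G)) :=
  {μ | ∃ F ∈ S0, ∀ z : VSet G, μ.1 z ≠ 0 → z.1.1 ∈ F}

/-- `Λ_{δ,𝒮₀}`. -/
def Lam (G : SimpleGraph V) [DecidableRel G.Adj] (v₁ : V) (δ : ℝ)
    (S0 : Set (Finset (Sym2 V))) (μ : ProbMeas (VSet G)) : EReal :=
  sInf { c : EReal |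
    ∃ (μs : Fin G.edgeFinset.card → ProbMeas (VSet G)) (r : Fin G.edgeFinset.card → ℝ)
      (Es : Fin G.edgeFinset.card → Finset (Sym2 V))
      (qs : Fin G.edgeFinset.card → VSet G → VSet G → ℝ),
      Es ∈ seqE G v₁ ∧ (∀ k, 0 ≤ r k) ∧ (∀ k, Es k ∉ S0 → r k = 0) ∧ (∑ k, r k = 1) ∧
      (∀ k z, (μs k).1 z ≠ 0 → z.1.1 ∈ Es k) ∧
      (∀ z, ∑ k, r k * (μs k).1 z = μ.1 z) ∧
      (∀ k, qs k ∈ TS G) ∧ (∀ k, Invariant (μs k).1 (qs k)) ∧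
      c = ∑ k, ((r k : ℝ) : EReal) * relEntInt (μs k).1 (qs k) (pS G δ (Es k)) }

/-- `Λ^z_{δ,𝒮₀}`. -/
def LamZ (G : SimpleGraph V) [DecidableRel G.Adj] (v₁ : V) (δ : ℝ)
    (S0 : Set (Finset (Sym2 V))) (z : VSet G) (μ : ProbMeas (VSet G)) : EReal :=
  sInf { c : EReal |
    ∃ (μs : Fin G.edgeFinset.card → ProbMeas (VSet G)) (r : Fin G.edgeFinset.card → ℝ)
      (Es : Fin G.edgeFinset.card → Finset (Sym2 V))
      (qs : Fin G.edgeFinset.card → VSet G → VSet G → ℝ),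
      Es ∈ seqE G v₁ ∧ (∀ k : Fin G.edgeFinset.card, (k : ℕ) = 0 → Es k = {z.1.1}) ∧
      (∀ k, 0 ≤ r k) ∧ (∀ k, Es k ∉ S0 → r k = 0) ∧ (∑ k, r k = 1) ∧
      (∀ k w, (μs k).1 w ≠ 0 → w.1.1 ∈ Es k) ∧
      (∀ w, ∑ k, r k * (μs k).1 w = μ.1 w) ∧
      (∀ k, qs k ∈ TS G) ∧ (∀ k, Invariant (μs k).1 (qs k)) ∧
      c = ∑ k, ((r k : ℝ) : EReal) * relEntInt (μs k).1 (qs k) (pS G δ (Es k)) }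

/-- `Λ₁`: the Donsker–Varadhan functional for the simple random walk on `S`
(whose kernel is `pS` with `δ = 1`). -/
def Lam1 (G : SimpleGraph V) [DecidableRel G.Adj] (μ : ProbMeas (VSet G)) : EReal :=
  sInf { c : EReal | ∃ q ∈ TS G, Invariant μ.1 q ∧ c = relEntInt μ.1 q (pS G 1 ∅) }

/-- Boundary `∂F` of an edge set: edges of `F` adjacent to some edge outside `F`. -/
def bdry (G : SimpleGraph V) [DecidableRel G.Adj] (F : Finset (Sym2 V)) : Finset (Sym2 V) :=
  F.filter fun e => ∃ e' ∈ G.edgeFinset \ F, edgeAdj e e'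

/-- Out-degree `d(z)` of `z` in `S`. -/
def outDeg (G : SimpleGraph V) [DecidableRel G.Adj] (z : VSet G) : ℕ :=
  (Finset.univ.filter (fun w : VSet G => zp G z = zm G w)).card

/-- Number `k(z)` of out-neighbours of `z` lying in `F × {-1, 1}`. -/
def outDegIn (G : SimpleGraph V) [DecidableRel G.Adj] (F : Finset (Sym2 V))
    (z : VSet G) : ℕ :=
  (Finset.univ.filter (fun w : VSet G => zp G z = zm G w ∧ w.1.1 ∈ F)).card

/-- The law of `(Z_0, …, Z_n)` for the lifted `δ`-ORRW conditioned on `Z_0 = z`. -/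
def liftTraj (G : SimpleGraph V) [DecidableRel G.Adj] (δ : ℝ) (z : VSet G) (n : ℕ)
    (g : Fin (n + 1) → VSet G) : ℝ :=
  if g 0 = z then
    ∏ i : Fin n,
      pS G δ ((Finset.Iic i.castSucc).image (fun j => (g j).1.1))
        (g i.castSucc) (g i.succ)
  else 0

/-- The restricted logarithmic Laplace functional `W^{n+1}_{𝒮₀}(z)`. -/
def Wres (G : SimpleGraph V) [DecidableRel G.Adj] (δ : ℝ) (z : VSet G)
    (S0 : Set (Finset (Sym2 V))) (h : ProbMeas (VSet G) → ℝ) (n : ℕ) : EReal :=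
  if 0 < ∑ g : Fin (n + 1) → VSet G,
      (if empMeas n g ∈ CC G S0 then liftTraj G δ z n g else 0) then
    ((-((((n : ℝ) + 1))⁻¹ * Real.log (∑ g : Fin (n + 1) → VSet G,
      if empMeas n g ∈ CC G S0 then
        Real.exp (-((n : ℝ) + 1) * h (empMeas n g)) * liftTraj G δ z n g
      else 0)) : ℝ) : EReal)
  else (⊤ : EReal)

end Lifted

set_option linter.unusedSectionVars false

section Proof

variable {V : Type} [Fintype V] [LinearOrder V] {G : SimpleGraph V} [DecidableRel G.Adj]

lemma edge_eq (z : VSet G) : z.1.1 = s(zm G z, zp G z) := by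
  obtain ⟨⟨e, he⟩, b⟩ := z
  induction e using Sym2.ind with
  | _ x y =>
    cases b <;> simp [zm, zp, sym2lo, sym2hi] <;> rcases le_total x y with h | h <;> simp [h]

lemma zm_mem (z : VSet G) : zm G z ∈ z.1.1 := by rw [edge_eq]; simp
lemma zp_mem (z : VSet G) : zp G z ∈ z.1.1 := by rw [edge_eq]; simp
lemma mem_edge {z : VSet G} {v : V} (h : v ∈ z.1.1) : v = zm G z ∨ v = zp G z := by
  rw [edge_eq] at h; simpa using h

/-- reversal -/
def fl (z : VSet G) : VSet G := (z.1, !z.2)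

@[simp] lemma zm_fl (z : VSet G) : zm G (fl z) = zp G z := by
  obtain ⟨e, b⟩ := z
  cases b <;> simp [zm, zp, fl]
@[simp] lemma zp_fl (z : VSet G) : zp G (fl z) = zm G z := by
  obtain ⟨e, b⟩ := z
  cases b <;> simp [zm, zp, fl]
@[simp] lemma fl_fst (z : VSet G) : (fl z).1 = z.1 := rfl
@[simp] lemma fl_fl (z : VSet G) : fl (fl z) = z := by
  obtain ⟨e, b⟩ := z
  simp [fl]

lemma exists_orient {e : Sym2 V} (he : e ∈ G.edgeFinset) {v : V} (hv : v ∈ e) :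
    ∃ w : VSet G, w.1.1 = e ∧ zm G w = v := by
  let w : VSet G := (⟨e, he⟩, true)
  rcases mem_edge (z := w) hv with h | h
  · exact ⟨w, rfl, h.symm⟩
  · exact ⟨fl w, rfl, by rw [zm_fl, h]⟩

/-- Row marginal. -/
def mar (m : VSet G → VSet G → ℝ) (z : VSet G) : ℝ := ∑ w, m z w

/-- Admissible pair measures. -/
def Adm (G : SimpleGraph V) [DecidableRel G.Adj] (F : Finset (Sym2 V)) :
    Set (VSet G → VSet G → ℝ) :=
  {m | (∀ z w, 0 ≤ m z w) ∧ (∑ z, mar m z = 1) ∧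
    (∀ z w, ¬ (zp G z = zm G w ∧ z.1.1 ∈ F ∧ w.1.1 ∈ F) → m z w = 0) ∧
    ∀ y, ∑ x, m x y = mar m y}

def Dw (G : SimpleGraph V) [DecidableRel G.Adj] (δ : ℝ) (F : Finset (Sym2 V)) (z : VSet G) : ℝ :=
  ∑ w : VSet G, if zp G z = zm G w then (if w.1.1 ∈ F then 1 else δ⁻¹) else 0

def Phi (G : SimpleGraph V) [DecidableRel G.Adj] (δ : ℝ) (F : Finset (Sym2 V))
    (m : VSet G → VSet G → ℝ) : ℝ :=
  (∑ z, ∑ w, m z w * Real.log (m z w)) - (∑ z, mar m z * Real.log (mar m z)) +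
    ∑ z, mar m z * Real.log (Dw G δ F z)

lemma Dw_term_nonneg {δ : ℝ} (hδ : 0 < δ) (F : Finset (Sym2 V)) (z w : VSet G) :
    (0:ℝ) ≤ if zp G z = zm G w then (if w.1.1 ∈ F then 1 else δ⁻¹) else 0 := by
  have : 0 < δ⁻¹ := inv_pos.2 hδ
  split_ifs <;> positivity

lemma Dw_ge {δ : ℝ} (hδ : 0 < δ) (F : Finset (Sym2 V)) (z w : VSet G) :
    (if zp G z = zm G w then (if w.1.1 ∈ F then 1 else δ⁻¹) else 0) ≤ Dw G δ F z :=
  Finset.single_le_sum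
    (f := fun w : VSet G => if zp G z = zm G w then (if w.1.1 ∈ F then 1 else δ⁻¹) else (0:ℝ))
    (fun w _ => Dw_term_nonneg hδ F z w) (Finset.mem_univ w)

lemma Dw_pos {δ : ℝ} (hδ : 0 < δ) (F : Finset (Sym2 V)) (z : VSet G) : 0 < Dw G δ F z := by
  refine lt_of_lt_of_le ?_ (Dw_ge hδ F z (fl z))
  have : 0 < δ⁻¹ := inv_pos.2 hδ
  simp only [zm_fl, if_true]
  split_ifs <;> positivity

lemma Dw_ge_one {δ : ℝ} (hδ : 0 < δ) {F : Finset (Sym2 V)} {z : VSet G} (hz : z.1.1 ∈ F) :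
    1 ≤ Dw G δ F z := by
  have := Dw_ge hδ F z (fl z)
  simpa [hz] using this

lemma Dw_anti {δ δ' : ℝ} (hδ : 0 < δ) (h : δ ≤ δ') (F : Finset (Sym2 V)) (z : VSet G) :
    Dw G δ' F z ≤ Dw G δ F z := by
  have : δ'⁻¹ ≤ δ⁻¹ := inv_anti₀ hδ h
  unfold Dw
  apply Finset.sum_le_sum
  intro w _
  split_ifs <;> simp [this]

lemma Dw_strict {δ δ' : ℝ} (hδ : 0 < δ) (h : δ < δ') (F : Finset (Sym2 V)) {z w : VSet G}
    (hzw : zp G z = zm G w) (hw : w.1.1 ∉ F) :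
    Dw G δ' F z < Dw G δ F z := by
  have h' : δ'⁻¹ < δ⁻¹ := inv_strictAnti₀ hδ h
  unfold Dw
  apply Finset.sum_lt_sum
  · intro w _
    split_ifs <;> simp [h'.le]
  · exact ⟨w, Finset.mem_univ _, by simp [hzw, hw, h']⟩

lemma Dw_const {δ δ' : ℝ} {F : Finset (Sym2 V)} {z : VSet G}
    (h : ∀ w : VSet G, zp G z = zm G w → w.1.1 ∈ F) :
    Dw G δ F z = Dw G δ' F z := by
  unfold Dw
  apply Finset.sum_congr rfl
  intro w _
  by_cases hw : zp G z = zm G w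
  · simp [hw, h w hw]
  · simp [hw]

lemma pS_eq {δ : ℝ} (hδ : 0 < δ) {F : Finset (Sym2 V)} {z w : VSet G}
    (hzw : zp G z = zm G w) :
    pS G δ F z w = (if w.1.1 ∈ F then 1 else δ⁻¹) / Dw G δ F z := by
  have hD : ∑ w : VSet G, (if zp G z = zm G w then gw δ F w.1.1 else 0) = δ * Dw G δ F z := by
    unfold Dw
    rw [Finset.mul_sum]
    apply Finset.sum_congr rfl
    intro w _
    unfold gw
    split_ifs <;> simp [hδ.ne']
  have := Dw_pos hδ F z
  unfold pS
  rw [if_pos hzw, hD]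
  unfold gw
  split_ifs <;> field_simp

lemma pS_pos {δ : ℝ} (hδ : 0 < δ) {F : Finset (Sym2 V)} {z w : VSet G}
    (hzw : zp G z = zm G w) : 0 < pS G δ F z w := by
  rw [pS_eq hδ hzw]
  have := Dw_pos hδ F z
  have : 0 < δ⁻¹ := inv_pos.2 hδ
  split_ifs <;> positivity

lemma pS_one (F : Finset (Sym2 V)) : pS G 1 F = pS G 1 ∅ := by
  funext z w
  simp [pS, gw]

lemma mar_nonneg {F : Finset (Sym2 V)} {m : VSet G → VSet G → ℝ} (h : m ∈ Adm G F) (z : VSet G) :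
    0 ≤ mar m z := Finset.sum_nonneg fun w _ => h.1 z w

lemma le_mar {F : Finset (Sym2 V)} {m : VSet G → VSet G → ℝ} (h : m ∈ Adm G F) (z w : VSet G) :
    m z w ≤ mar m z :=
  Finset.single_le_sum (f := fun w => m z w) (fun w _ => h.1 z w) (Finset.mem_univ w)

lemma le_mar_right {F : Finset (Sym2 V)} {m : VSet G → VSet G → ℝ} (h : m ∈ Adm G F)
    (z w : VSet G) : m z w ≤ mar m w := by
  rw [← h.2.2.2 w]
  exact Finset.single_le_sum (f := fun z => m z w) (fun z _ => h.1 z w) (Finset.mem_univ z)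

lemma mar_supp {F : Finset (Sym2 V)} {m : VSet G → VSet G → ℝ} (h : m ∈ Adm G F) {z : VSet G}
    (hz : mar m z ≠ 0) : z.1.1 ∈ F := by
  by_contra hF
  exact hz (Finset.sum_eq_zero fun w _ => h.2.2.1 z w fun h => hF h.2.1)

/-- from measure/kernel to pair measure -/
lemma adm_of {F : Finset (Sym2 V)} (μ : ProbMeas (VSet G)) {q : VSet G → VSet G → ℝ}
    (hq : q ∈ TS G) (hinv : Invariant μ.1 q) (hs : ∀ z, μ.1 z ≠ 0 → z.1.1 ∈ F) :
    (fun z w => μ.1 z * q z w) ∈ Adm G F ∧ mar (fun z w => μ.1 z * q z w) = μ.1 := by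
  have hmar : mar (fun z w => μ.1 z * q z w) = μ.1 := by
    funext z
    unfold mar
    rw [← Finset.mul_sum, hq.2.1, mul_one]
  refine ⟨⟨fun z w => mul_nonneg (μ.2.1 z) (hq.1 z w), by rw [hmar]; exact μ.2.2, ?_, ?_⟩, hmar⟩
  · intro z w h
    by_contra h0
    have h1 := left_ne_zero_of_mul h0
    have h2 := right_ne_zero_of_mul h0
    refine h ⟨hq.2.2 z w h2, hs z h1, hs w ?_⟩
    intro hw
    have h3 := hinv w
    rw [hw, Finset.sum_eq_zero_iff_of_nonneg
      (fun x _ => mul_nonneg (μ.2.1 x) (hq.1 x w))] at h3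
    exact h0 (h3 z (Finset.mem_univ _))
  · intro y
    rw [hmar]; exact hinv y

lemma coe_sum_real {ι : Type} (s : Finset ι) (f : ι → ℝ) :
    ((∑ i ∈ s, f i : ℝ) : EReal) = ∑ i ∈ s, (f i : EReal) := by
  induction s using Finset.induction_on with
  | empty => simp
  | insert a s ha ih => rw [Finset.sum_insert ha, Finset.sum_insert ha, EReal.coe_add, ih]

lemma relEntInt_eq {δ : ℝ} (hδ : 0 < δ) {F : Finset (Sym2 V)} (μ : ProbMeas (VSet G))
    {q : VSet G → VSet G → ℝ}
    (hq : q ∈ TS G) (hinv : Invariant μ.1 q) (hs : ∀ z, μ.1 z ≠ 0 → z.1.1 ∈ F) :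
    relEntInt μ.1 q (pS G δ F) = (Phi G δ F (fun z w => μ.1 z * q z w) : EReal) := by
  obtain ⟨hadm, hmar⟩ := adm_of μ hq hinv hs
  have h1 : relEntInt μ.1 q (pS G δ F) =
      ((∑ z, μ.1 z * ∑ w, q z w * Real.log (q z w / pS G δ F z w) : ℝ) : EReal) := by
    rw [coe_sum_real]
    unfold relEntInt
    apply Finset.sum_congr rfl
    intro z _
    rw [relEnt, if_pos, EReal.coe_mul]
    intro w hw
    by_contra h0
    exact (pS_pos hδ (F := F) (hq.2.2 z w h0)).ne' hw
  rw [h1]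
  congr 1
  unfold Phi
  rw [hmar, ← Finset.sum_sub_distrib, ← Finset.sum_add_distrib]
  apply Finset.sum_congr rfl
  intro z _
  have e1 : μ.1 z * Real.log (μ.1 z) = ∑ w, μ.1 z * q z w * Real.log (μ.1 z) := by
    rw [← Finset.sum_mul, ← Finset.mul_sum, hq.2.1, mul_one]
  have e2 : μ.1 z * Real.log (Dw G δ F z) = ∑ w, μ.1 z * q z w * Real.log (Dw G δ F z) := by
    rw [← Finset.sum_mul, ← Finset.mul_sum, hq.2.1, mul_one]
  rw [e1, e2, ← Finset.sum_sub_distrib, ← Finset.sum_add_distrib, Finset.mul_sum]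
  apply Finset.sum_congr rfl
  intro w _
  by_cases h0 : μ.1 z * q z w = 0
  · rw [← mul_assoc]; simp only [h0]; simp
  · have hz := left_ne_zero_of_mul h0
    have hw := right_ne_zero_of_mul h0
    have h2 : zp G z = zm G w ∧ z.1.1 ∈ F ∧ w.1.1 ∈ F := by
      by_contra h
      exact h0 (hadm.2.2.1 z w h)
    rw [pS_eq hδ h2.1, if_pos h2.2.2, Real.log_mul hz hw, one_div, div_inv_eq_mul,
      Real.log_mul hw (Dw_pos hδ F z).ne']
    ring

lemma exists_of_adm {F : Finset (Sym2 V)} {m : VSet G → VSet G → ℝ} (h : m ∈ Adm G F) :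
    ∃ (μ : ProbMeas (VSet G)) (q : VSet G → VSet G → ℝ), q ∈ TS G ∧ Invariant μ.1 q ∧
      (∀ z, μ.1 z ≠ 0 → z.1.1 ∈ F) ∧ μ.1 = mar m ∧ (fun z w => μ.1 z * q z w) = m := by
  let q : VSet G → VSet G → ℝ := fun z w =>
    if mar m z = 0 then (if w = fl z then 1 else 0) else m z w / mar m z
  have hm : ∀ z w, mar m z * q z w = m z w := by
    intro z w
    by_cases h0 : mar m z = 0
    · have := le_mar h z w
      have := h.1 z w
      simp only [h0, zero_mul]; linarith
    · simp only [q, if_neg h0]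
      field_simp
  refine ⟨⟨mar m, mar_nonneg h, h.2.1⟩, q, ⟨?_, ?_, ?_⟩, ?_, fun z => mar_supp h, rfl, ?_⟩
  · intro z w
    have h1 := h.1 z w
    have h2 := mar_nonneg h z
    simp only [q]
    split_ifs <;> positivity
  · intro z
    by_cases h0 : mar m z = 0
    · simp [q, h0]
    · simp only [q, if_neg h0]
      rw [← Finset.sum_div]
      exact div_self h0
  · intro z w hzw
    by_cases h0 : mar m z = 0
    · simp only [q, if_pos h0] at hzw
      have : w = fl z := by by_contra hh; simp [hh] at hzw
      rw [this, zm_fl]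
    · simp only [q, if_neg h0] at hzw
      by_contra hh
      apply hzw
      rw [h.2.2.1 z w (fun h => hh h.1), zero_div]
  · intro y
    simp only [hm]
    exact h.2.2.2 y
  · funext z w
    exact hm z w

end Proof

section Proof2

variable {V : Type} [Fintype V] [LinearOrder V] {G : SimpleGraph V} [DecidableRel G.Adj]

/-- four-cycle pair measure -/
def cyc (a b : VSet G) (z w : VSet G) : ℝ :=
  ((if z = a then 1 else 0) * (if w = b then 1 else 0) +
   (if z = b then 1 else 0) * (if w = fl b then 1 else 0) +
   (if z = fl b then 1 else 0) * (if w = fl a then 1 else 0) +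
   (if z = fl a then 1 else 0) * (if w = a then 1 else 0)) / 4

lemma cyc_adm {F : Finset (Sym2 V)} {a b : VSet G} (hab : zp G a = zm G b) (ha : a.1.1 ∈ F)
    (hb : b.1.1 ∈ F) : cyc a b ∈ Adm G F := by
  have hmar : ∀ z, mar (cyc a b) z = ((if z = a then 1 else 0) + (if z = b then 1 else 0) +
      (if z = fl b then 1 else 0) + (if z = fl a then 1 else 0)) / 4 := by
    intro z
    unfold mar cyc
    rw [← Finset.sum_div]
    simp only [Finset.sum_add_distrib, ← Finset.mul_sum]
    simp
  refine ⟨?_, ?_, ?_, ?_⟩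
  · intro z w
    unfold cyc
    positivity
  · simp only [hmar]
    rw [← Finset.sum_div]
    simp only [Finset.sum_add_distrib]
    simp
    norm_num
  · intro z w h
    unfold cyc
    have h1 : ¬ (z = a ∧ w = b) := by
      rintro ⟨rfl, rfl⟩; exact h ⟨hab, ha, hb⟩
    have h2 : ¬ (z = b ∧ w = fl b) := by
      rintro ⟨rfl, rfl⟩; exact h ⟨by simp, hb, hb⟩
    have h3 : ¬ (z = fl b ∧ w = fl a) := by
      rintro ⟨rfl, rfl⟩; exact h ⟨by simp [hab], hb, ha⟩
    have h4 : ¬ (z = fl a ∧ w = a) := by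
      rintro ⟨rfl, rfl⟩; exact h ⟨by simp, ha, ha⟩
    simp only [ite_zero_mul_ite_zero, mul_one, if_neg h1, if_neg h2, if_neg h3, if_neg h4]
    simp
  · intro y
    rw [hmar]
    unfold cyc
    rw [← Finset.sum_div]
    simp only [Finset.sum_add_distrib, ← Finset.sum_mul]
    simp
    ring

lemma cyc_pos (a b : VSet G) : 0 < cyc a b a b := by
  unfold cyc
  simp only [if_true]
  positivity

lemma cyc_nonneg (a b z w : VSet G) : 0 ≤ cyc a b z w := by
  unfold cyc
  positivity

lemma cont_Phi (δ : ℝ) (F : Finset (Sym2 V)) : Continuous (Phi G δ F) := by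
  have hm : ∀ z : VSet G, Continuous (fun m : VSet G → VSet G → ℝ => mar m z) := by
    intro z; unfold mar; fun_prop
  have hl := Real.continuous_mul_log
  unfold Phi
  refine Continuous.add (Continuous.sub ?_ ?_) ?_
  · refine continuous_finsetSum _ fun z _ => continuous_finsetSum _ fun w _ => ?_
    exact hl.comp (f := fun m : VSet G → VSet G → ℝ => m z w) (by fun_prop)
  · refine continuous_finsetSum _ fun z _ => ?_
    exact hl.comp (hm z)
  · refine continuous_finsetSum _ fun z _ => ?_
    exact (hm z).mul continuous_const

lemma mar_le_one {F : Finset (Sym2 V)} {m : VSet G → VSet G → ℝ} (h : m ∈ Adm G F) (z : VSet G) :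
    mar m z ≤ 1 := by
  rw [← h.2.1]
  exact Finset.single_le_sum (f := mar m) (fun z _ => mar_nonneg h z) (Finset.mem_univ z)

lemma closed_Adm (F : Finset (Sym2 V)) : IsClosed (Adm G F) := by
  have hm : ∀ z : VSet G, Continuous (fun m : VSet G → VSet G → ℝ => mar m z) := by
    intro z; unfold mar; fun_prop
  unfold Adm
  simp only [Set.ofPred_and, Set.ofPred_forall]
  refine IsClosed.inter ?_ (IsClosed.inter ?_ (IsClosed.inter ?_ ?_))
  · exact isClosed_iInter fun z => isClosed_iInter fun w =>
      isClosed_le continuous_const (by fun_prop)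
  · exact isClosed_eq (continuous_finsetSum _ fun z _ => hm z) continuous_const
  · exact isClosed_iInter fun z => isClosed_iInter fun w => isClosed_iInter fun _ =>
      isClosed_eq (by fun_prop) continuous_const
  · exact isClosed_iInter fun y => isClosed_eq (by fun_prop) (hm y)

lemma compact_Adm (F : Finset (Sym2 V)) : IsCompact (Adm G F) := by
  have hK : IsCompact (Set.pi Set.univ (fun _ : VSet G => Set.pi Set.univ
      (fun _ : VSet G => Set.Icc (0:ℝ) 1))) :=
    isCompact_univ_pi fun _ => isCompact_univ_pi fun _ => isCompact_Icc
  refine hK.of_isClosed_subset (closed_Adm F) ?_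
  intro m hm z _ w _
  exact ⟨hm.1 z w, (le_mar hm z w).trans (mar_le_one hm z)⟩

lemma Phi_anti {δ δ' : ℝ} (hδ : 0 < δ) (h : δ ≤ δ') {F : Finset (Sym2 V)}
    {m : VSet G → VSet G → ℝ} (hm : m ∈ Adm G F) : Phi G δ' F m ≤ Phi G δ F m := by
  unfold Phi
  gcongr with z _
  · exact mar_nonneg hm z
  · exact Dw_pos (hδ.trans_le h) F z
  · exact Dw_anti hδ h F z

lemma Phi_strict {δ δ' : ℝ} (hδ : 0 < δ) (h : δ < δ') {F : Finset (Sym2 V)}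
    {m : VSet G → VSet G → ℝ} (hm : m ∈ Adm G F) {z w : VSet G} (hz : mar m z ≠ 0)
    (hzw : zp G z = zm G w) (hw : w.1.1 ∉ F) : Phi G δ' F m < Phi G δ F m := by
  unfold Phi
  gcongr 1
  apply Finset.sum_lt_sum
  · intro z _
    have := Dw_pos (hδ.trans h) F z
    gcongr
    · exact mar_nonneg hm z
    · exact Dw_anti hδ h.le F z
  · refine ⟨z, Finset.mem_univ _, ?_⟩
    have := lt_of_le_of_ne (mar_nonneg hm z) hz.symm
    have := Dw_pos (hδ.trans h) F z
    gcongr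
    exact Dw_strict hδ h F hzw hw

lemma Phi_const {δ δ' : ℝ} {F : Finset (Sym2 V)} {m : VSet G → VSet G → ℝ}
    (h : ∀ z w : VSet G, mar m z ≠ 0 → zp G z = zm G w → w.1.1 ∈ F) :
    Phi G δ F m = Phi G δ' F m := by
  unfold Phi
  congr 1
  apply Finset.sum_congr rfl
  intro z _
  by_cases hz : mar m z = 0
  · simp [hz]
  · rw [Dw_const (δ := δ) (δ' := δ') (fun w => h z w hz)]

/-- one-term expansion -/
lemma term_tendsto {a b : ℝ} (ha : 0 ≤ a) (hb : 0 ≤ b) :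
    ∃ c, Tendsto (fun t : ℝ => (((1 - t) * a + t * b) * Real.log ((1 - t) * a + t * b)
      - a * Real.log a) / t - (if a = 0 then b else 0) * Real.log t) (𝓝[>] 0) (𝓝 c) := by
  rcases ha.eq_or_lt with rfl | ha
  · refine ⟨b * Real.log b, ?_⟩
    refine tendsto_const_nhds.congr' ?_
    filter_upwards [self_mem_nhdsWithin] with t (ht : 0 < t)
    rcases hb.eq_or_lt with rfl | hb
    · simp
    · simp only [mul_zero, zero_add, if_true, zero_mul, sub_zero]
      rw [Real.log_mul ht.ne' hb.ne']
      field_simp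
      ring
  · have h1 : HasDerivAt (fun t : ℝ => (1 - t) * a + t * b) (-1 * a + 1 * b) 0 := by
      exact ((((hasDerivAt_id (0:ℝ)).const_sub 1).mul_const a).add
        ((hasDerivAt_id (0:ℝ)).mul_const b))
    have h2 : HasDerivAt (fun x : ℝ => x * Real.log x) (Real.log a + 1)
        ((fun t : ℝ => (1 - t) * a + t * b) 0) := by
      simpa using Real.hasDerivAt_mul_log ha.ne'
    have h3 := (h2.comp (0:ℝ) h1).tendsto_slope_zero_right
    refine ⟨_, h3.congr' ?_⟩
    filter_upwards [self_mem_nhdsWithin] with t (ht : 0 < t)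
    simp [ha.ne', div_eq_inv_mul]

lemma mar_mix (m n : VSet G → VSet G → ℝ) (t : ℝ) (z : VSet G) :
    mar (fun z w => (1 - t) * m z w + t * n z w) z = (1 - t) * mar m z + t * mar n z := by
  unfold mar
  rw [Finset.sum_add_distrib, Finset.mul_sum, Finset.mul_sum]

lemma adm_mix {F : Finset (Sym2 V)} {m n : VSet G → VSet G → ℝ} (hm : m ∈ Adm G F)
    (hn : n ∈ Adm G F) {t : ℝ} (h0 : 0 ≤ t) (h1 : t ≤ 1) :
    (fun z w => (1 - t) * m z w + t * n z w) ∈ Adm G F := by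
  refine ⟨?_, ?_, ?_, ?_⟩
  · intro z w
    have := hm.1 z w
    have := hn.1 z w
    have : 0 ≤ 1 - t := by linarith
    positivity
  · simp only [mar_mix]
    rw [Finset.sum_add_distrib, ← Finset.mul_sum, ← Finset.mul_sum, hm.2.1, hn.2.1]
    ring
  · intro z w h
    simp [hm.2.2.1 z w h, hn.2.2.1 z w h]
  · intro y
    rw [mar_mix, ← hm.2.2.2, ← hn.2.2.2, Finset.sum_add_distrib, Finset.mul_sum, Finset.mul_sum]

/-- If `m` misses a transition out of its support, then it is not a minimizer. -/
lemma exists_better {δ : ℝ} {F : Finset (Sym2 V)} {m n : VSet G → VSet G → ℝ} (hm : m ∈ Adm G F)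
    (hn : n ∈ Adm G F) {a b : VSet G} (hma : mar m a ≠ 0) (hmab : m a b = 0)
    (hnab : 0 < n a b) : ∃ m' ∈ Adm G F, Phi G δ F m' < Phi G δ F m := by
  choose c hc using fun z w => term_tendsto (hm.1 z w) (hn.1 z w)
  choose d hd using fun z => term_tendsto (mar_nonneg hm z) (mar_nonneg hn z)
  set κ : ℝ := (∑ z, ∑ w, if m z w = 0 then n z w else 0) - ∑ z, if mar m z = 0 then mar n z else 0
    with hκ
  have hκpos : 0 < κ := by
    rw [hκ, ← Finset.sum_sub_distrib]
    have hterm : ∀ z, (if mar m z = 0 then mar n z else 0) ≤ ∑ w, if m z w = 0 then n z w else 0 := by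
      intro z
      split_ifs with hz
      · apply Finset.sum_le_sum
        intro w _
        have h1 := hm.1 z w
        have h2 := le_mar hm z w
        rw [if_pos (by linarith)]
      · apply Finset.sum_nonneg
        intro w _
        split_ifs
        · exact hn.1 z w
        · exact le_rfl
    apply Finset.sum_pos'
    · intro z _
      exact sub_nonneg.2 (hterm z)
    · refine ⟨a, Finset.mem_univ _, ?_⟩
      rw [if_neg hma, sub_zero]
      apply Finset.sum_pos'
      · intro w _
        split_ifs
        · exact hn.1 a w
        · exact le_rfl
      · exact ⟨b, Finset.mem_univ _, by rw [if_pos hmab]; exact hnab⟩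
  set e : ℝ := ∑ z, (mar n z - mar m z) * Real.log (Dw G δ F z) with he
  have hT := ((tendsto_finsetSum Finset.univ fun z _ =>
      tendsto_finsetSum Finset.univ fun w _ => hc z w).sub
    (tendsto_finsetSum Finset.univ fun z _ => hd z)).add
      (tendsto_const_nhds (x := e) (f := 𝓝[>] (0:ℝ)))
  have hlog : Tendsto (fun t : ℝ => κ * Real.log t) (𝓝[>] 0) atBot :=
    Tendsto.const_mul_atBot hκpos Real.tendsto_log_nhdsGT_zero
  have hsum := hT.add_atBot hlog
  have hev := (hsum.eventually (eventually_lt_atBot 0)).and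
    (show ∀ᶠ t : ℝ in 𝓝[>] 0, 0 < t ∧ t < 1 from
      Ioo_mem_nhdsGT (by norm_num : (0:ℝ) < 1))
  obtain ⟨t, hlt, ht0, ht1⟩ := hev.exists
  refine ⟨_, adm_mix hm hn ht0.le ht1.le, ?_⟩
  have key : (Phi G δ F (fun z w => (1 - t) * m z w + t * n z w) - Phi G δ F m) / t < 0 := by
    refine lt_of_eq_of_lt ?_ hlt
    have hL : ∑ z, ((1 - t) * mar m z + t * mar n z) * Real.log (Dw G δ F z) =
        (∑ z, mar m z * Real.log (Dw G δ F z)) + t * e := by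
      rw [he, Finset.mul_sum, ← Finset.sum_add_distrib]
      exact Finset.sum_congr rfl fun z _ => by ring
    unfold Phi
    simp only [mar_mix]
    rw [hL, hκ]
    simp only [Finset.sum_sub_distrib, ← Finset.sum_div, ← Finset.sum_mul]
    generalize (∑ z, ∑ w, ((1 - t) * m z w + t * n z w) *
      Real.log ((1 - t) * m z w + t * n z w)) = X1
    generalize (∑ z, ((1 - t) * mar m z + t * mar n z) *
      Real.log ((1 - t) * mar m z + t * mar n z)) = X2
    generalize (∑ z, ∑ w, m z w * Real.log (m z w)) = X3
    generalize (∑ z, mar m z * Real.log (mar m z)) = X4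
    generalize (∑ z, mar m z * Real.log (Dw G δ F z)) = X5
    field_simp
    ring
  rw [div_lt_iff₀ ht0, zero_mul] at key
  linarith

end Proof2

section Proof3

variable {V : Type} [Fintype V] [LinearOrder V] {G : SimpleGraph V} [DecidableRel G.Adj]

lemma reach_closed {H : SimpleGraph V} {P : V → Prop} (hP : ∀ x y, H.Adj x y → P x → P y)
    {x y : V} (h : H.Reachable x y) (hx : P x) : P y := by
  obtain ⟨w⟩ := h
  induction w with
  | nil => exact hx
  | cons hadj _ ih => exact ih (hP _ _ hadj hx)

lemma grow {v₁ : V} {X F : Finset (Sym2 V)} (hX : X ∈ scrS G v₁) (hFX : F ⊆ X)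
    (hne : F.Nonempty) (hF : F ≠ X) : ∃ e ∈ X, e ∉ F ∧ ∃ e' ∈ F, edgeAdj e e' := by
  by_contra hcon
  push Not at hcon
  apply hF
  have hmem : ∀ e ∈ X, ∀ v, v ∈ e → memVerts F v → e ∈ F := by
    rintro e he v hv ⟨e', he', hv'⟩
    by_contra h
    exact hcon e he h e' he' ⟨v, hv, hv'⟩
  obtain ⟨e0, he0⟩ := hne
  obtain ⟨x0, hx0⟩ : ∃ x, x ∈ e0 := by
    induction e0 using Sym2.ind with
    | _ x y => exact ⟨x, by simp⟩
  refine Finset.Subset.antisymm hFX fun e he => ?_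
  obtain ⟨x, hx⟩ : ∃ x, x ∈ e := by
    clear he
    induction e using Sym2.ind with
    | _ x y => exact ⟨x, by simp⟩
  refine hmem e he x hx ?_
  refine reach_closed (P := memVerts F) ?_ (hX.2.2 x0 x ⟨e0, hFX he0, hx0⟩ ⟨e, he, hx⟩)
    ⟨e0, he0, hx0⟩
  intro a b hab ha
  rw [SimpleGraph.fromEdgeSet_adj] at hab
  exact ⟨s(a, b), hmem _ hab.1 a (by simp) ha, by simp⟩

lemma full_mem (hG : G.Connected) {v₁ : V} {E : Finset (Sym2 V)} (hE : E ∈ scrS G v₁) :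
    G.edgeFinset ∈ scrS G v₁ := by
  refine ⟨subset_rfl, ?_, ?_⟩
  · obtain ⟨e, he, hv⟩ := hE.2.1
    exact ⟨e, hE.1 he, hv⟩
  · intro x y _ _
    rw [SimpleGraph.coe_edgeFinset, SimpleGraph.fromEdgeSet_edgeSet]
    exact hG.preconnected x y

lemma exists_seq (hG : G.Connected) {v₁ : V} {E : Finset (Sym2 V)} (hE : E ∈ scrS G v₁) :
    ∃ Es ∈ seqE G v₁, ∃ k, Es k = E := by
  have hfull := full_mem hG hE
  have hstep : ∀ F : Finset (Sym2 V), ∃ e, (F ⊆ G.edgeFinset → F.Nonempty → F ≠ G.edgeFinset →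
      (F ⊆ E ∨ E ⊆ F) → e ∈ G.edgeFinset ∧ e ∉ F ∧ (∃ e' ∈ F, edgeAdj e e') ∧
        (insert e F ⊆ E ∨ E ⊆ insert e F)) := by
    intro F
    by_cases h : F ⊆ G.edgeFinset ∧ F.Nonempty ∧ F ≠ G.edgeFinset ∧ (F ⊆ E ∨ E ⊆ F)
    · obtain ⟨h1, h2, h3, h4⟩ := h
      by_cases h5 : E ⊆ F
      · obtain ⟨e, he, heF, ha⟩ := grow hfull h1 h2 h3
        exact ⟨e, fun _ _ _ _ => ⟨he, heF, ha, Or.inr (h5.trans (Finset.subset_insert _ _))⟩⟩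
      · have h6 : F ⊆ E := h4.resolve_right h5
        obtain ⟨e, he, heF, ha⟩ := grow hE h6 h2 (fun h => h5 (h ▸ subset_rfl))
        exact ⟨e, fun _ _ _ _ => ⟨hE.1 he, heF, ha, Or.inl (Finset.insert_subset he h6)⟩⟩
    · obtain ⟨e, -⟩ := hE.2.1
      exact ⟨e, fun a b c d => absurd ⟨a, b, c, d⟩ h⟩
  choose nx hnx using hstep
  obtain ⟨e0, he0, hv0⟩ := hE.2.1
  let f : ℕ → Finset (Sym2 V) := fun n => Nat.rec {e0} (fun _ F => insert (nx F) F) n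
  have hf0 : f 0 = {e0} := rfl
  have hfs : ∀ n, f (n + 1) = insert (nx (f n)) (f n) := fun n => rfl
  have hinv : ∀ n, n < G.edgeFinset.card → f n ⊆ G.edgeFinset ∧ (f n).card = n + 1 ∧
      (f n ⊆ E ∨ E ⊆ f n) := by
    intro n
    induction n with
    | zero =>
      intro _
      rw [hf0]
      refine ⟨by simpa using hE.1 he0, by simp, Or.inl (by simpa using he0)⟩
    | succ n ih =>
      intro hn
      obtain ⟨h1, h2, h3⟩ := ih (by omega)
      have := hnx (f n) h1 (Finset.card_pos.1 (by omega)) (fun h => by rw [h] at h2; omega) h3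
      rw [hfs]
      refine ⟨Finset.insert_subset this.1 h1, ?_, this.2.2.2⟩
      rw [Finset.card_insert_of_notMem this.2.1, h2]
  have hnx' : ∀ n, n + 1 < G.edgeFinset.card → nx (f n) ∉ f n ∧
      ∃ e' ∈ f n, edgeAdj (nx (f n)) e' := by
    intro n hn
    obtain ⟨h1, h2, h3⟩ := hinv n (by omega)
    have := hnx (f n) h1 (Finset.card_pos.1 (by omega)) (fun h => by rw [h] at h2; omega) h3
    exact ⟨this.2.1, this.2.2.1⟩
  refine ⟨fun k => f k, ⟨fun k => (hinv k k.2).1, fun k => (hinv k k.2).2.1, ?_, ?_, ?_⟩, ?_⟩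
  · intro k l hkl
    have hl := l.2
    simp only [← hkl, hfs]
    exact Finset.ssubset_insert (hnx' k (by omega)).1
  · intro k hk
    simp only [hk, hf0]
    exact ⟨e0, by simp, hv0⟩
  · intro k l hkl e he
    have hl := l.2
    simp only [← hkl, hfs] at he
    have hee : e = nx (f k) := by
      simp only [Finset.mem_sdiff, Finset.mem_insert] at he
      tauto
    rw [hee]
    exact (hnx' k (by omega)).2
  · have hpos : 0 < E.card := Finset.card_pos.2 ⟨e0, he0⟩
    have hle : E.card ≤ G.edgeFinset.card := Finset.card_le_card hE.1
    have hlt : E.card - 1 < G.edgeFinset.card := by omega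
    refine ⟨⟨E.card - 1, hlt⟩, ?_⟩
    obtain ⟨-, h2, h3⟩ := hinv _ hlt
    show f (E.card - 1) = E
    rcases h3 with h3 | h3
    · exact Finset.eq_of_subset_of_card_le h3 (by omega)
    · exact (Finset.eq_of_subset_of_card_le h3 (by omega)).symm

lemma adm_nonempty {F : Finset (Sym2 V)} (hF : F ⊆ G.edgeFinset) (hne : F.Nonempty) :
    (Adm G F).Nonempty := by
  obtain ⟨e, he⟩ := hne
  let a : VSet G := (⟨e, hF he⟩, true)
  exact ⟨_, cyc_adm (a := a) (b := fl a) (by simp) he he⟩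

lemma exists_bdry (hG : G.Connected) {v₁ : V} {E : Finset (Sym2 V)} (hE : E ∈ scrS G v₁)
    (hne : E ≠ G.edgeFinset) {δ : ℝ} {m : VSet G → VSet G → ℝ} (hm : m ∈ Adm G E)
    (hmin : ∀ m' ∈ Adm G E, Phi G δ E m ≤ Phi G δ E m') :
    ∃ z w : VSet G, mar m z ≠ 0 ∧ zp G z = zm G w ∧ w.1.1 ∉ E := by
  obtain ⟨e1, he1, -⟩ := hE.2.1
  obtain ⟨e, he, heE, e', he', v, hv, hv'⟩ := grow (full_mem hG hE) hE.1 ⟨e1, he1⟩ hne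
  obtain ⟨z0, hz0⟩ : ∃ z, mar m z ≠ 0 := by
    by_contra h
    push Not at h
    have := hm.2.1
    simp [h] at this
  have hP : ∃ z : VSet G, mar m z ≠ 0 ∧ zp G z = v := by
    refine reach_closed (P := fun v => ∃ z : VSet G, mar m z ≠ 0 ∧ zp G z = v) ?_
      (hE.2.2 (zp G z0) v ⟨_, mar_supp hm hz0, zp_mem z0⟩ ⟨e', he', hv'⟩) ⟨z0, hz0, rfl⟩
    rintro x y hxy ⟨z, hz, rfl⟩
    rw [SimpleGraph.fromEdgeSet_adj] at hxy
    have hxyE : s(zp G z, y) ∈ E := hxy.1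
    obtain ⟨w, hw, hwz⟩ := exists_orient (G := G) (hE.1 hxyE) (v := zp G z) (by simp)
    have hwy : zp G w = y := by
      have h1 := edge_eq w
      rw [hw, hwz] at h1
      simp only [Sym2.eq_iff, true_and] at h1
      rcases h1 with h1 | h1
      · exact h1.symm
      · rw [← h1.1, h1.2]
    refine ⟨w, ?_, hwy⟩
    intro hw0
    have hzw : m z w = 0 := le_antisymm (hw0 ▸ le_mar_right hm z w) (hm.1 z w)
    obtain ⟨m', hm', hlt⟩ := exists_better (δ := δ) hm
      (cyc_adm (a := z) (b := w) hwz.symm (mar_supp hm hz) (by rw [hw]; exact hxyE)) hz hzw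
      (cyc_pos z w)
    exact absurd (hmin m' hm') (not_le.2 hlt)
  obtain ⟨z, hz, hzv⟩ := hP
  obtain ⟨w, hw, hwv⟩ := exists_orient (G := G) he hv
  exact ⟨z, w, hz, by rw [hzv, hwv], by rw [hw]; exact heE⟩

lemma le_Lam {v₁ : V} {δ : ℝ} (hδ : 0 < δ) {S0 : Set (Finset (Sym2 V))} {M : EReal}
    (hM : ∀ E ∈ S0, ∀ m ∈ Adm G E, M ≤ (Phi G δ E m : EReal)) (μ : ProbMeas (VSet G)) :
    M ≤ Lam G v₁ δ S0 μ := by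
  apply le_sInf
  rintro c ⟨μs, r, Es, qs, -, hr, hrS, hr1, hsupp, -, hq, hinv, rfl⟩
  have h1 : ∀ k, relEntInt (μs k).1 (qs k) (pS G δ (Es k)) = _ :=
    fun k => relEntInt_eq hδ (μs k) (hq k) (hinv k) (hsupp k)
  simp only [h1, ← EReal.coe_mul, ← coe_sum_real]
  set Φ := fun k => Phi G δ (Es k) (fun z w => (μs k).1 z * qs k z w) with hΦ
  obtain ⟨k, hk, hle⟩ : ∃ k, r k ≠ 0 ∧ Φ k ≤ ∑ j, r j * Φ j := by
    by_contra hcon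
    push Not at hcon
    set s := ∑ j, r j * Φ j with hs
    obtain ⟨k, hk⟩ : ∃ k, r k ≠ 0 := by
      by_contra h
      push Not at h
      simp [h] at hr1
    have h0 : ∑ j, r j * (Φ j - s) = 0 := by
      simp only [mul_sub, Finset.sum_sub_distrib, ← Finset.sum_mul, hr1, ← hs]
      ring
    have hp : 0 < ∑ j, r j * (Φ j - s) := by
      apply Finset.sum_pos'
      · intro j _
        by_cases hj : r j = 0
        · simp [hj]
        · exact mul_nonneg (hr j) (sub_nonneg.2 (hcon j hj).le)
      · exact ⟨k, Finset.mem_univ _, mul_pos (lt_of_le_of_ne (hr k) hk.symm)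
          (sub_pos.2 (hcon k hk))⟩
    exact hp.ne' h0
  refine (hM (Es k) ?_ _ (adm_of (μs k) (hq k) (hinv k) (hsupp k)).1).trans
    (EReal.coe_le_coe_iff.2 hle)
  by_contra h
  exact hk (hrS k h)

lemma sInf_le_Phi (hG : G.Connected) {v₁ : V} {δ : ℝ} (hδ : 0 < δ) {S0 : Set (Finset (Sym2 V))}
    (hS0sub : S0 ⊆ scrS G v₁) {E : Finset (Sym2 V)} (hE : E ∈ S0) {m : VSet G → VSet G → ℝ}
    (hm : m ∈ Adm G E) : sInf (Lam G v₁ δ S0 '' CC G S0) ≤ (Phi G δ E m : EReal) := by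
  obtain ⟨Es, hEs, k0, hk0⟩ := exists_seq hG (hS0sub hE)
  have hex : ∀ k, ∃ mk ∈ Adm G (Es k), k = k0 → mk = m := by
    intro k
    by_cases hk : k = k0
    · subst hk
      exact ⟨m, by rw [hk0]; exact hm, fun _ => rfl⟩
    · obtain ⟨mk, hmk⟩ := adm_nonempty (hEs.1 k)
        (Finset.card_pos.1 (by rw [hEs.2.1 k]; omega))
      exact ⟨mk, hmk, fun h => absurd h hk⟩
  choose ms hms hms0 using hex
  choose μs qs hq hinv hsupp hμ hmq using fun k => exists_of_adm (hms k)
  refine le_trans (b := Lam G v₁ δ S0 (μs k0))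
    (sInf_le ⟨μs k0, ⟨E, hE, fun z hz => hk0 ▸ hsupp k0 z hz⟩, rfl⟩) ?_
  apply sInf_le
  refine ⟨μs, fun k => if k = k0 then 1 else 0, Es, qs, hEs, ?_, ?_, ?_, hsupp, ?_, hq, hinv, ?_⟩
  · intro k
    dsimp only
    split_ifs <;> norm_num
  · intro k hk
    dsimp only
    rw [if_neg]
    rintro rfl
    exact hk (hk0 ▸ hE)
  · simp
  · intro z
    simp
  · rw [Finset.sum_eq_single k0]
    · dsimp only
      rw [if_pos rfl, relEntInt_eq hδ (μs k0) (hq k0) (hinv k0) (hsupp k0), hmq, hms0 k0 rfl, hk0]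
      simp
    · intro k _ hk
      simp [hk]
    · simp

lemma exists_min (hG : G.Connected) {v₁ : V} {δ : ℝ} (hδ : 0 < δ) {S0 : Set (Finset (Sym2 V))}
    (hS0ne : S0.Nonempty) (hS0sub : S0 ⊆ scrS G v₁) :
    ∃ E ∈ S0, ∃ m ∈ Adm G E, sInf (Lam G v₁ δ S0 '' CC G S0) = (Phi G δ E m : EReal) ∧
      ∀ m' ∈ Adm G E, Phi G δ E m ≤ Phi G δ E m' := by
  have h1 : ∀ E : Finset (Sym2 V), ∃ m, E ∈ S0 → m ∈ Adm G E ∧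
      ∀ m' ∈ Adm G E, Phi G δ E m ≤ Phi G δ E m' := by
    intro E
    by_cases hE : E ∈ S0
    · obtain ⟨e, he, -⟩ := (hS0sub hE).2.1
      obtain ⟨m, hm, hmin⟩ := (compact_Adm E).exists_isMinOn
        (adm_nonempty (hS0sub hE).1 ⟨e, he⟩) (cont_Phi (G := G) δ E).continuousOn
      exact ⟨m, fun _ => ⟨hm, hmin⟩⟩
    · exact ⟨fun _ _ => 0, fun h => absurd h hE⟩
  choose ms hms using h1
  obtain ⟨E, hE, hmin⟩ := Set.exists_min_image S0 (fun E => Phi G δ E (ms E)) (Set.toFinite _) hS0ne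
  refine ⟨E, hE, ms E, (hms E hE).1, le_antisymm (sInf_le_Phi hG hδ hS0sub hE (hms E hE).1) ?_,
    (hms E hE).2⟩
  apply le_sInf
  rintro _ ⟨μ, -, rfl⟩
  refine le_Lam hδ ?_ μ
  intro E' hE' m' hm'
  exact EReal.coe_le_coe_iff.2 ((hmin E' hE').trans ((hms E' hE').2 m' hm'))

/-- Interiority of out-neighbours. -/
lemma out_mem_of_interior {F : Finset (Sym2 V)} {z w : VSet G} (hz : z.1.1 ∈ F ∧ z.1.1 ∉ bdry G F)
    (hzw : zp G z = zm G w) : w.1.1 ∈ F := by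
  by_contra hw
  apply hz.2
  refine Finset.mem_filter.2 ⟨hz.1, w.1.1, Finset.mem_sdiff.2 ⟨w.1.2, hw⟩, zp G z, zp_mem z, ?_⟩
  rw [hzw]
  exact zm_mem w

lemma interior_of_out {F : Finset (Sym2 V)} {m : VSet G → VSet G → ℝ} (hm : m ∈ Adm G F)
    (h : ∀ z w : VSet G, mar m z ≠ 0 → zp G z = zm G w → w.1.1 ∈ F) {z : VSet G}
    (hz : mar m z ≠ 0) : z.1.1 ∈ F ∧ z.1.1 ∉ bdry G F := by
  refine ⟨mar_supp hm hz, fun hb => ?_⟩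
  obtain ⟨-, e', he', v, hv, hv'⟩ := Finset.mem_filter.1 hb
  rw [Finset.mem_sdiff] at he'
  obtain ⟨w, hw, hwv⟩ := exists_orient (G := G) he'.1 hv'
  have hx : ∃ x, mar m x ≠ 0 ∧ zp G x = v := by
    rcases mem_edge hv with h1 | h1
    · have h2 : ∑ x, m x z ≠ 0 := by rw [hm.2.2.2]; exact hz
      obtain ⟨x, -, hx⟩ := Finset.exists_ne_zero_of_sum_ne_zero h2
      refine ⟨x, ?_, ?_⟩
      · intro h0
        exact hx (le_antisymm (h0 ▸ le_mar hm x z) (hm.1 x z))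
      · by_contra hne
        apply hx
        apply hm.2.2.1
        rintro ⟨h3, -⟩
        exact hne (by rw [h3, h1])
    · exact ⟨z, hz, h1.symm⟩
  obtain ⟨x, hx, hxv⟩ := hx
  apply he'.2
  rw [← hw]
  exact h x w hx (by rw [hxv, hwv])

lemma out_of_bounded {F : Finset (Sym2 V)} {m : VSet G → VSet G → ℝ} (hm : m ∈ Adm G F) {M : ℝ}
    (hM : ∀ δ > 0, Phi G δ F m ≤ M) (z w : VSet G) (hz : mar m z ≠ 0) (hzw : zp G z = zm G w) :
    w.1.1 ∈ F := by
  by_contra hw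
  have hzpos := lt_of_le_of_ne (mar_nonneg hm z) hz.symm
  set J := (∑ z, ∑ w, m z w * Real.log (m z w)) - (∑ z, mar m z * Real.log (mar m z)) with hJ
  set T := (M - J + 1) / mar m z with hT
  have h1 := hM (Real.exp (-T)) (Real.exp_pos _)
  have h2 : mar m z * T ≤ ∑ z, mar m z * Real.log (Dw G (Real.exp (-T)) F z) := by
    have h3 : T ≤ Real.log (Dw G (Real.exp (-T)) F z) := by
      rw [Real.le_log_iff_exp_le (Dw_pos (Real.exp_pos _) F z)]
      have := Dw_ge (Real.exp_pos (-T)) F z w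
      rw [if_pos hzw, if_neg hw, ← Real.exp_neg, neg_neg] at this
      exact this
    refine (mul_le_mul_of_nonneg_left h3 hzpos.le).trans ?_
    refine Finset.single_le_sum (f := fun z => mar m z * Real.log (Dw G (Real.exp (-T)) F z))
      (fun x _ => ?_) (Finset.mem_univ z)
    by_cases hx : mar m x = 0
    · simp [hx]
    · exact mul_nonneg (mar_nonneg hm x)
        (Real.log_nonneg (Dw_ge_one (Real.exp_pos _) (mar_supp hm hx)))
  have h4 : mar m z * T = M - J + 1 := by rw [hT]; field_simp
  unfold Phi at h1
  linarith

lemma exists_limit {F : Finset (Sym2 V)} {M : ℝ}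
    (h : ∀ δ > 0, ∃ m ∈ Adm G F, Phi G δ F m ≤ M) :
    ∃ m ∈ Adm G F, ∀ δ > 0, Phi G δ F m ≤ M := by
  let K : Set.Ioi (0:ℝ) → Set (VSet G → VSet G → ℝ) := fun δ => Adm G F ∩ {m | Phi G δ F m ≤ M}
  have hcl : ∀ δ, IsClosed (K δ) := fun δ =>
    (closed_Adm F).inter (isClosed_le (cont_Phi _ F) continuous_const)
  have : Nonempty (Set.Ioi (0:ℝ)) := ⟨⟨1, by simp⟩⟩
  obtain ⟨m, hm⟩ := IsCompact.nonempty_iInter_of_directed_nonempty_isCompact_isClosed K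
    (by
      intro a b
      refine ⟨min a b, ?_, ?_⟩
      · rintro m ⟨hm, hle⟩
        exact ⟨hm, (Phi_anti (min a b).2 (min_le_left a b) hm).trans hle⟩
      · rintro m ⟨hm, hle⟩
        exact ⟨hm, (Phi_anti (min a b).2 (min_le_right a b) hm).trans hle⟩)
    (fun δ => by
      obtain ⟨m, hm, hle⟩ := h δ δ.2
      exact ⟨m, hm, hle⟩)
    (fun δ => (compact_Adm F).of_isClosed_subset (hcl δ) Set.inter_subset_left) hcl
  rw [Set.mem_iInter] at hm
  exact ⟨m, (hm ⟨1, by simp⟩).1, fun δ hδ => (hm ⟨δ, hδ⟩).2⟩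

end Proof3

section Proof4

variable {V : Type} [Fintype V] [LinearOrder V] {G : SimpleGraph V} [DecidableRel G.Adj]

lemma strictAnti_a (hG : G.Connected) {v₁ : V} {S0 : Set (Finset (Sym2 V))} (hS0ne : S0.Nonempty)
    (hS0sub : S0 ⊆ scrS G v₁) (hS0dec : DecreasingIn G v₁ S0) (hS0ne' : S0 ≠ scrS G v₁) :
    StrictAntiOn (fun d : ℝ => sInf (Lam G v₁ d S0 '' CC G S0)) (Set.Ioi 0) := by
  intro d1 hd1 d2 hd2 hlt
  obtain ⟨E, hE, m, hm, heq, hmin⟩ := exists_min hG hd1 hS0ne hS0sub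
  have hEne : E ≠ G.edgeFinset := by
    rintro rfl
    apply hS0ne'
    refine Set.Subset.antisymm hS0sub fun F hF => ?_
    exact hS0dec F _ hF (hS0sub hE) hF.1 hE
  obtain ⟨z, w, hz, hzw, hw⟩ := exists_bdry hG (hS0sub hE) hEne hm hmin
  show sInf (Lam G v₁ d2 S0 '' CC G S0) < sInf (Lam G v₁ d1 S0 '' CC G S0)
  rw [heq]
  exact (sInf_le_Phi hG hd2 hS0sub hE hm).trans_lt
    (EReal.coe_lt_coe_iff.2 (Phi_strict hd1 hlt hm hz hzw hw))

/-- value for interior measures -/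
lemma interior_value {F : Finset (Sym2 V)} (μ : ProbMeas (VSet G)) {q : VSet G → VSet G → ℝ}
    (hq : q ∈ TS G) (hinv : Invariant μ.1 q) :
    (∀ z : VSet G, μ.1 z ≠ 0 → z.1.1 ∈ F ∧ z.1.1 ∉ bdry G F) → ∀ δ : ℝ,
    relEntInt μ.1 q (pS G 1 ∅) = (Phi G δ F (fun z w => μ.1 z * q z w) : EReal) := by
  intro hs δ
  rw [← pS_one F, relEntInt_eq one_pos μ hq hinv (fun z hz => (hs z hz).1)]
  congr 1
  apply Phi_const
  intro z w hz hzw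
  rw [(adm_of μ hq hinv (fun z hz => (hs z hz).1)).2] at hz
  exact out_mem_of_interior (hs z hz) hzw

lemma tendsto_a (hG : G.Connected) {v₁ : V} {S0 : Set (Finset (Sym2 V))} (hS0ne : S0.Nonempty)
    (hS0sub : S0 ⊆ scrS G v₁) (hS0dec : DecreasingIn G v₁ S0) (hS0ne' : S0 ≠ scrS G v₁) :
    Tendsto (fun d : ℝ => sInf (Lam G v₁ d S0 '' CC G S0))
          (nhdsWithin 0 (Set.Ioi 0))
          (nhds (sInf { c : EReal | ∃ (μ : ProbMeas (VSet G)) (F : Finset (Sym2 V)),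
            F ∈ S0 ∧ (∀ z : VSet G, μ.1 z ≠ 0 → z.1.1 ∈ F ∧ z.1.1 ∉ bdry G F) ∧
            c = Lam1 G μ })) := by
  have hanti := (strictAnti_a hG hS0ne hS0sub hS0dec hS0ne').antitoneOn
  set L := sInf { c : EReal | ∃ (μ : ProbMeas (VSet G)) (F : Finset (Sym2 V)),
            F ∈ S0 ∧ (∀ z : VSet G, μ.1 z ≠ 0 → z.1.1 ∈ F ∧ z.1.1 ∉ bdry G F) ∧
            c = Lam1 G μ } with hL
  have hle : ∀ d > 0, sInf (Lam G v₁ d S0 '' CC G S0) ≤ L := by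
    intro d hd
    apply le_sInf
    rintro _ ⟨μ, F, hF, hs, rfl⟩
    apply le_sInf
    rintro _ ⟨q, hq, hinv, rfl⟩
    rw [interior_value μ hq hinv hs d]
    exact sInf_le_Phi hG hd hS0sub hF (adm_of μ hq hinv (fun z hz => (hs z hz).1)).1
  have hge : ∀ M : ℝ, (M : EReal) < L → ∃ d > 0, (M : EReal) < sInf (Lam G v₁ d S0 '' CC G S0) := by
    intro M hM
    by_contra hcon
    push Not at hcon
    have hE : ∀ E : Finset (Sym2 V), ∃ d > 0, E ∈ S0 → ∀ m ∈ Adm G E, M < Phi G d E m := by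
      intro E
      by_cases hES : E ∈ S0
      · by_contra hc
        push Not at hc
        obtain ⟨m, hm, hbd⟩ := exists_limit (G := G) (F := E) (M := M) fun δ hδ => (hc δ hδ).2
        have hout := out_of_bounded hm hbd
        obtain ⟨μ, q, hq, hinv, hsupp, hμ, hmq⟩ := exists_of_adm hm
        have hs : ∀ z : VSet G, μ.1 z ≠ 0 → z.1.1 ∈ E ∧ z.1.1 ∉ bdry G E := by
          intro z hz
          rw [hμ] at hz
          exact interior_of_out hm hout hz
        have h1 : L ≤ (Phi G 1 E m : EReal) := by
          rw [← hmq, ← interior_value μ hq hinv hs 1]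
          exact le_trans (b := Lam1 G μ) (sInf_le ⟨μ, E, hES, hs, rfl⟩)
            (sInf_le ⟨q, hq, hinv, rfl⟩)
        exact absurd (hM.trans_le h1) (not_lt.2 (EReal.coe_le_coe_iff.2 (hbd 1 one_pos)))
      · exact ⟨1, one_pos, fun h => absurd h hES⟩
    choose dE hdE hPhi using hE
    obtain ⟨E0, -, hE0⟩ := Finset.exists_min_image (Finset.univ : Finset (Finset (Sym2 V))) dE
      ⟨∅, Finset.mem_univ _⟩
    obtain ⟨E, hES, m, hm, heq, -⟩ := exists_min hG (hdE E0) hS0ne hS0sub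
    have h1 := hcon (dE E0) (hdE E0)
    rw [heq, EReal.coe_le_coe_iff] at h1
    have h2 := hPhi E hES m hm
    have h3 := Phi_anti (hdE E0) (hE0 E (Finset.mem_univ _)) hm
    linarith
  refine tendsto_order.2 ⟨?_, ?_⟩
  · intro l hl
    obtain ⟨M, hlM, hML⟩ := EReal.lt_iff_exists_real_btwn.1 hl
    obtain ⟨d, hd, hMd⟩ := hge M hML
    filter_upwards [Ioo_mem_nhdsGT hd] with t ht
    exact (hlM.trans hMd).trans_le (hanti ht.1 hd ht.2.le)
  · intro u hu
    filter_upwards [self_mem_nhdsWithin] with t ht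
    exact (hle t ht).trans_lt hu

end Proof4

/-- `δ' ↦ inf_{𝒞(𝒮₀)} Λ_{δ',𝒮₀}` is strictly decreasing on `(0,∞)`,
and its limit as `δ' → 0+` is finite (and given by a `Λ₁`-variational formula)
exactly when some invariant measure is supported away from a boundary. -/
theorem orrw_alpha_monotone_limit {V : Type} [Fintype V] [LinearOrder V]
    (G : SimpleGraph V) [DecidableRel G.Adj] (hG : G.Connected)
    (hV : 3 ≤ Fintype.card V) (v₁ : V)
    (S0 : Set (Finset (Sym2 V))) (hS0ne : S0.Nonempty) (hS0sub : S0 ⊆ scrS G v₁)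
    (hS0dec : DecreasingIn G v₁ S0) (hS0ne' : S0 ≠ scrS G v₁) :
    StrictAntiOn (fun d : ℝ => sInf (Lam G v₁ d S0 '' CC G S0)) (Set.Ioi 0) ∧
    ((∃ F ∈ S0, ∃ (μ : ProbMeas (VSet G)) (q : VSet G → VSet G → ℝ),
        q ∈ TS G ∧ Invariant μ.1 q ∧
        ∀ z : VSet G, μ.1 z ≠ 0 → z.1.1 ∈ F ∧ z.1.1 ∉ bdry G F) →
      (Tendsto (fun d : ℝ => sInf (Lam G v₁ d S0 '' CC G S0))
          (nhdsWithin 0 (Set.Ioi 0))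
          (nhds (sInf { c : EReal | ∃ (μ : ProbMeas (VSet G)) (F : Finset (Sym2 V)),
            F ∈ S0 ∧ (∀ z : VSet G, μ.1 z ≠ 0 → z.1.1 ∈ F ∧ z.1.1 ∉ bdry G F) ∧
            c = Lam1 G μ })) ∧
        sInf { c : EReal | ∃ (μ : ProbMeas (VSet G)) (F : Finset (Sym2 V)),
          F ∈ S0 ∧ (∀ z : VSet G, μ.1 z ≠ 0 → z.1.1 ∈ F ∧ z.1.1 ∉ bdry G F) ∧
          c = Lam1 G μ } < ⊤)) ∧
    (¬ (∃ F ∈ S0, ∃ (μ : ProbMeas (VSet G)) (q : VSet G → VSet G → ℝ),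
        q ∈ TS G ∧ Invariant μ.1 q ∧
        ∀ z : VSet G, μ.1 z ≠ 0 → z.1.1 ∈ F ∧ z.1.1 ∉ bdry G F) →
      Tendsto (fun d : ℝ => sInf (Lam G v₁ d S0 '' CC G S0))
        (nhdsWithin 0 (Set.Ioi 0)) (nhds (⊤ : EReal))) := by
  refine ⟨strictAnti_a hG hS0ne hS0sub hS0dec hS0ne', ?_, ?_⟩
  · rintro ⟨F, hF, μ, q, hq, hinv, hs⟩
    refine ⟨tendsto_a hG hS0ne hS0sub hS0dec hS0ne', ?_⟩
    refine lt_of_le_of_lt (le_trans (b := Lam1 G μ) (sInf_le ⟨μ, F, hF, hs, rfl⟩)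
      (sInf_le ⟨q, hq, hinv, rfl⟩)) ?_
    rw [interior_value μ hq hinv hs 1]
    exact EReal.coe_lt_top _
  · intro hno
    have h := tendsto_a hG hS0ne hS0sub hS0dec hS0ne'
    convert h using 2
    symm
    rw [sInf_eq_top]
    rintro _ ⟨μ, F, hF, hs, rfl⟩
    unfold Lam1
    rw [sInf_eq_top]
    rintro _ ⟨q, hq, hinv, rfl⟩
    exact absurd ⟨F, hF, μ, q, hq, hinv, hs⟩ hno

end ORRW
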